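/- arXiv:2503.21715 — 2 statements merged into one kernel-verified Lean document; each statement's English description precedes it below -/
import Mathlib

section
/- For every positive integer n, the smooth approximation q̃(n) = (n/16)^{1/3} satisfies |q̃(n) - q*(n)| < 1, where q*(n) is the minimizer over positive integers q of MSE_n(q) = ⌊(n-1)/(q+1)⌋^{-1} · v(q) + (2/5 + 1/(10q) - v_n)^2, with v(1) = 7/20, v(2) = 1353/2800, v(q) = 8/25 + 88/(175q) - 229/(700q^2) for q ≥ 3, and v_n = n(n-2)(4n-7) / (10(n-1)^2(n+1)). -/
open Real

/-- The variance term `v(q)` of the bootstrap variance `V_j^B` (Lemma on `Var(V_j^B)`). -/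
noncomputable def blockVar (q : ℕ) : ℝ :=
  if q = 1 then 7 / 20
  else if q = 2 then 1353 / 2800
  else 8 / 25 + 88 / (175 * q) - 229 / (700 * (q : ℝ) ^ 2)

/-- The exact finite-sample variance `v_n` of `√n` times Chatterjee's rank correlation
under the null. -/
noncomputable def vSeq (n : ℕ) : ℝ :=
  (n : ℝ) * ((n : ℝ) - 2) * (4 * (n : ℝ) - 7) / (10 * ((n : ℝ) - 1) ^ 2 * ((n : ℝ) + 1))

/-- The mean squared error `MSE_n(q)` of the bootstrap variance. -/
noncomputable def MSE (n q : ℕ) : ℝ :=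
  (((n - 1) / (q + 1) : ℕ) : ℝ)⁻¹ * blockVar q
    + (2 / 5 + 1 / (10 * (q : ℝ)) - vSeq n) ^ 2

/-!
The number of blocks `⌊(n-1)/(q+1)⌋` differs little from `(n-1)/(q+1)`, and `2/5 - v_n` is
`O(1/n)`. Up to lower order terms and a summand independent of `q`, the product `(n-1) * MSE_n(q)`
is therefore `(8/25) q + (n-1) / (100 q²)`, a convex function of `q` with minimum at
`((n-1)/16)^(1/3)`. Hence `q + 1` beats `q` when `16 (q+1)³ ≤ n`, and `p = ⌈(n/16)^(1/3)⌉` beats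
every larger `q`. The margin in both comparisons is of order `1/q`, which absorbs the lower order
terms.
-/

/-- The smooth approximation `q̃(n)` of the minimizer of `MSE_n`. -/
noncomputable def smoothQ (n : ℕ) : ℝ :=
  ((n : ℝ) / 16) ^ ((1 : ℝ) / 3)

/-- The summand `(q+1) v(q)` that `(n-1) * MSE_n(q)` contains once the number of blocks
`⌊(n-1)/(q+1)⌋` is replaced by `(n-1)/(q+1)`. -/
noncomputable def scaledVar (q : ℕ) : ℝ :=
  ((q : ℝ) + 1) * blockVar q

/-- The quantity `(n-1) * MSE_n(q)` with `⌊(n-1)/(q+1)⌋` replaced by `(n-1)/(q+1)`. -/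
noncomputable def scaledRisk (n q : ℕ) : ℝ :=
  scaledVar q + ((n : ℝ) - 1) * (2 / 5 + 1 / (10 * (q : ℝ)) - vSeq n) ^ 2

/-- A bound for the amount by which rounding the number of blocks down increases
`(n-1) * MSE_n(q)`; it is meaningful for `q < n - 1`. -/
noncomputable def roundingLoss (n q : ℕ) : ℝ :=
  scaledVar q * q / ((n : ℝ) - 1 - q)

/-- The distance of `v_n` to its limit `2/5`, in units of `1/(n-1)`. -/
noncomputable def biasGap (n : ℕ) : ℝ :=
  ((n : ℝ) - 1) * (2 / 5 - vSeq n)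

/-- A lower bound for the increments of `scaledRisk` to the right of `p`, with `N = n - 1`. It
is the slope between `p` and `p + 1` of `(8/25) t + 277/(700 t) + N/(100 t²)`; the coefficient
`277/700 = 123/700 + 11/50` collects the `1/t` terms of `scaledVar` and of the squared bias. -/
noncomputable def slopeBound (N p : ℝ) : ℝ :=
  8 / 25 - 277 / (700 * (p * (p + 1))) - (2 * p + 1) / (p ^ 2 * (p + 1) ^ 2) / 100 * N

section FloorDivision

variable {a b : ℕ}

lemma div_le_inv_natCast_div (hb : 0 < b) (hab : b ≤ a) :
    (b : ℝ) / a ≤ ((a / b : ℕ) : ℝ)⁻¹ := by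
  have hdiv : (0 : ℝ) < (a / b : ℕ) := by exact_mod_cast Nat.div_pos hab hb
  rw [← inv_div]
  exact inv_anti₀ hdiv Nat.cast_div_le

lemma inv_natCast_div_le (hb : 0 < b) (hab : b ≤ a) :
    ((a / b : ℕ) : ℝ)⁻¹ ≤ b / ((a : ℝ) + 1 - b) := by
  have hb' : (0 : ℝ) < b := by exact_mod_cast hb
  have hab' : (b : ℝ) ≤ a := by exact_mod_cast hab
  have hlt : (a : ℝ) + 1 ≤ (a / b : ℕ) * b + b := by
    exact_mod_cast Nat.lt_div_mul_add hb
  rw [← inv_div]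
  refine inv_anti₀ (div_pos (by linarith) hb') ?_
  rw [div_le_iff₀ hb']
  linarith

end FloorDivision

section ScaledVar

variable {p q : ℕ}

lemma blockVar_of_three_le (hq : 3 ≤ q) :
    blockVar q = 8 / 25 + 88 / (175 * q) - 229 / (700 * (q : ℝ) ^ 2) := by
  rw [blockVar, if_neg (by omega), if_neg (by omega)]

lemma scaledVar_one : scaledVar 1 = 7 / 10 := by
  norm_num [scaledVar, blockVar]

lemma scaledVar_two : scaledVar 2 = 4059 / 2800 := by
  norm_num [scaledVar, blockVar]

lemma scaledVar_of_three_le (hq : 3 ≤ q) :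
    scaledVar q = 8 / 25 * q + 144 / 175 + 123 / (700 * q) - 229 / (700 * (q : ℝ) ^ 2) := by
  have hq0 : (q : ℝ) ≠ 0 := by exact_mod_cast (by omega : q ≠ 0)
  rw [scaledVar, blockVar_of_three_le hq]
  field_simp
  ring

lemma le_scaledVar_of_two_le (hq : 2 ≤ q) : 4059 / 2800 ≤ scaledVar q := by
  obtain rfl | h3 := hq.eq_or_lt
  · exact scaledVar_two.ge
  have hq3 : (3 : ℝ) ≤ q := by exact_mod_cast h3
  have hinv : 0 ≤ 123 / (700 * (q : ℝ)) := by positivity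
  have hinv_sq : 229 / (700 * (q : ℝ) ^ 2) ≤ 229 / (700 * 3 ^ 2) := by gcongr
  rw [scaledVar_of_three_le h3]
  linarith

lemma scaledVar_pos (hq : 1 ≤ q) : 0 < scaledVar q := by
  obtain rfl | h2 := hq.eq_or_lt
  · norm_num [scaledVar_one]
  · linarith [le_scaledVar_of_two_le h2]

lemma blockVar_pos (hq : 1 ≤ q) : 0 < blockVar q :=
  pos_of_mul_pos_right (scaledVar_pos hq) (by positivity)

lemma scaledVar_le_mul (hq : 2 ≤ q) : scaledVar q ≤ 73 / 100 * q := by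
  obtain rfl | h3 := hq.eq_or_lt
  · norm_num [scaledVar_two]
  have hq3 : (3 : ℝ) ≤ q := by exact_mod_cast h3
  have hinv : 123 / (700 * (q : ℝ)) ≤ 123 / (700 * 3) := by gcongr
  have hinv_sq : 0 ≤ 229 / (700 * (q : ℝ) ^ 2) := by positivity
  rw [scaledVar_of_three_le h3]
  linarith

lemma scaledVar_succ_sub_le (hq : 1 ≤ q) :
    scaledVar (q + 1) - scaledVar q ≤ 8 / 25 + 43 / (100 * q) := by
  obtain rfl | rfl | h3 : q = 1 ∨ q = 2 ∨ 3 ≤ q := by omega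
  · norm_num [scaledVar_one, scaledVar_two]
  · norm_num [scaledVar_two, scaledVar_of_three_le (le_refl 3)]
  have hq3 : (3 : ℝ) ≤ q := by exact_mod_cast h3
  have hinv : 123 / (700 * ((q : ℝ) + 1)) ≤ 123 / (700 * q) := by gcongr; linarith
  have hinv_sq : 229 / (700 * (q : ℝ) ^ 2) ≤ 43 / (100 * q) := by
    rw [div_le_div_iff₀ (by positivity) (by positivity)]
    nlinarith
  have hinv_sq_succ : 0 ≤ 229 / (700 * ((q : ℝ) + 1) ^ 2) := by positivity
  rw [scaledVar_of_three_le h3, scaledVar_of_three_le (by omega)]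
  push_cast
  linarith

lemma scaledVar_le_of_two_le (hp : 2 ≤ p) :
    scaledVar p ≤ 8 / 25 * p + 144 / 175 + 123 / (700 * p) - 229 / (700 * (p : ℝ) ^ 2) := by
  obtain rfl | h3 := hp.eq_or_lt
  · norm_num [scaledVar_two]
  · exact (scaledVar_of_three_le h3).le

lemma le_scaledVar_sub (hp : 2 ≤ p) (hpq : p < q) :
    8 / 25 * ((q : ℝ) - p) - 123 / 700 * (1 / p - 1 / q) ≤ scaledVar q - scaledVar p := by
  have : (0 : ℝ) < p := by exact_mod_cast (by omega : 0 < p)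
  have hpq' : (p : ℝ) ≤ q := by exact_mod_cast hpq.le
  have hinv_sq : 229 / (700 * (q : ℝ) ^ 2) ≤ 229 / (700 * (p : ℝ) ^ 2) := by gcongr
  have hsplit (t : ℝ) : 123 / (700 * t) = 123 / 700 * (1 / t) := by ring
  have hp_le := scaledVar_le_of_two_le hp
  rw [hsplit] at hp_le
  rw [scaledVar_of_three_le (show 3 ≤ q by omega), hsplit]
  linarith

end ScaledVar

section BiasGap

variable {n : ℕ}

lemma biasGap_eq (hn : 2 ≤ n) :
    biasGap n = (11 * (n : ℝ) ^ 2 - 18 * n + 4) / (10 * (((n : ℝ) - 1) * (n + 1))) := by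
  have hn' : (2 : ℝ) ≤ n := by exact_mod_cast hn
  have hpred : (n : ℝ) - 1 ≠ 0 := by linarith
  have hsucc : (n : ℝ) + 1 ≠ 0 := by linarith
  rw [biasGap, vSeq]
  field_simp
  ring

lemma biasGap_nonneg (hn : 2 ≤ n) : 0 ≤ biasGap n := by
  have hn' : (2 : ℝ) ≤ n := by exact_mod_cast hn
  rw [biasGap_eq hn]
  apply div_nonneg <;> nlinarith

lemma biasGap_le (hn : 2 ≤ n) : biasGap n ≤ 11 / 10 := by
  have hn' : (2 : ℝ) ≤ n := by exact_mod_cast hn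
  rw [biasGap_eq hn, div_le_iff₀ (by nlinarith)]
  nlinarith

end BiasGap

section RemovingTheFloor

variable {n p q : ℕ}

lemma scaledRisk_le_mul_MSE (hq : 1 ≤ q) (hqn : q + 1 < n) :
    scaledRisk n q ≤ ((n : ℝ) - 1) * MSE n q := by
  have hcast : ((n - 1 : ℕ) : ℝ) = n - 1 := Nat.cast_pred (by omega)
  have hN : (0 : ℝ) < n - 1 := by rw [← hcast]; exact_mod_cast (by omega : 0 < n - 1)
  have hfloor := div_le_inv_natCast_div q.succ_pos (show q + 1 ≤ n - 1 by omega)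
  rw [hcast, div_le_iff₀' hN] at hfloor
  push_cast at hfloor
  have hvar := mul_le_mul_of_nonneg_right hfloor (blockVar_pos hq).le
  rw [scaledRisk, scaledVar, MSE]
  linarith

lemma mul_MSE_le_scaledRisk_add_roundingLoss (hq : 1 ≤ q) (hqn : q + 1 < n) :
    ((n : ℝ) - 1) * MSE n q ≤ scaledRisk n q + roundingLoss n q := by
  have hcast : ((n - 1 : ℕ) : ℝ) = n - 1 := Nat.cast_pred (by omega)
  have hqn' : (q : ℝ) + 1 < n := by exact_mod_cast hqn
  have hsub : (0 : ℝ) < n - 1 - q := by linarith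
  have hN : (0 : ℝ) ≤ n - 1 := by linarith [q.cast_nonneg (α := ℝ)]
  have hfloor : ((n : ℝ) - 1) * (((n - 1) / (q + 1) : ℕ) : ℝ)⁻¹
      ≤ (q + 1) + (q + 1) * q / ((n : ℝ) - 1 - q) := by
    calc ((n : ℝ) - 1) * (((n - 1) / (q + 1) : ℕ) : ℝ)⁻¹
        ≤ ((n : ℝ) - 1) * ((q + 1) / (n - 1 - q)) := by
          have h := inv_natCast_div_le q.succ_pos (show q + 1 ≤ n - 1 by omega)
          rw [hcast] at h
          push_cast at h
          rw [sub_add_cancel, ← sub_sub_sub_cancel_right _ _ (1 : ℝ), add_sub_cancel_right] at h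
          gcongr
      _ = (q + 1) + (q + 1) * q / ((n : ℝ) - 1 - q) := by
          field_simp
          ring
  have hvar := mul_le_mul_of_nonneg_right hfloor (blockVar_pos hq).le
  have hloss : roundingLoss n q = (q + 1) * q / ((n : ℝ) - 1 - q) * blockVar q := by
    rw [roundingLoss, scaledVar]
    ring
  rw [hloss, scaledRisk, scaledVar, MSE]
  linarith

lemma MSE_lt_of_scaledRisk_lt (hp : 1 ≤ p) (hpn : p + 1 < n) (hq : 1 ≤ q) (hqn : q + 1 < n)
    (h : scaledRisk n p + roundingLoss n p < scaledRisk n q) : MSE n p < MSE n q := by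
  have hN : (0 : ℝ) < n - 1 := by
    rw [sub_pos]
    exact_mod_cast (by omega : 1 < n)
  refine lt_of_mul_lt_mul_left ?_ hN.le
  calc ((n : ℝ) - 1) * MSE n p
      ≤ scaledRisk n p + roundingLoss n p := mul_MSE_le_scaledRisk_add_roundingLoss hp hpn
    _ < scaledRisk n q := h
    _ ≤ ((n : ℝ) - 1) * MSE n q := scaledRisk_le_mul_MSE hq hqn

lemma scaledRisk_sub (n p q : ℕ) :
    scaledRisk n q - scaledRisk n p = scaledVar q - scaledVar p
      - ((n : ℝ) - 1) / 100 * (1 / (p : ℝ) ^ 2 - 1 / (q : ℝ) ^ 2)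
      - biasGap n / 5 * (1 / (p : ℝ) - 1 / q) := by
  rw [scaledRisk, scaledRisk, biasGap]
  ring

end RemovingTheFloor

section Descent

variable {n q : ℕ}

lemma succ_le_half_of_cube_le (hn : 16 * ((q : ℝ) + 1) ^ 3 ≤ n) : q + 1 ≤ (n - 1) / 2 := by
  have hcube : 16 * (q + 1) ^ 3 ≤ n := by exact_mod_cast hn
  have := Nat.le_self_pow three_ne_zero (q + 1)
  omega

lemma roundingLoss_le_of_cube_le {p : ℕ} (hp : 2 ≤ p) (hn : 16 * (p : ℝ) ^ 3 ≤ n) :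
    roundingLoss n p ≤ 1 / (20 * p) := by
  have hp2 : (2 : ℝ) ≤ p := by exact_mod_cast hp
  have hden : 73 / 5 * (p : ℝ) ^ 3 ≤ n - 1 - p := by nlinarith [sq_nonneg ((p : ℝ) - 2)]
  have hden_pos : (0 : ℝ) < n - 1 - p := lt_of_lt_of_le (by positivity) hden
  rw [roundingLoss, div_le_div_iff₀ hden_pos (by positivity)]
  nlinarith [mul_le_mul_of_nonneg_right (scaledVar_le_mul hp) (sq_nonneg (p : ℝ))]

lemma lt_bias_sq_sub {N t : ℝ} (ht : 1 ≤ t) (hN : 16 * (t + 1) ^ 3 - 1 ≤ N) :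
    8 / 25 + 12 / (25 * t) < N / 100 * (1 / t ^ 2 - 1 / (t + 1) ^ 2) := by
  have hdiff : 1 / t ^ 2 - 1 / (t + 1) ^ 2 = (2 * t + 1) / (t ^ 2 * (t + 1) ^ 2) := by
    field_simp
    ring
  calc 8 / 25 + 12 / (25 * t)
      < (16 * (t + 1) ^ 3 - 1) / 100 * ((2 * t + 1) / (t ^ 2 * (t + 1) ^ 2)) := by
        rw [← sub_pos]
        have hgap : (16 * (t + 1) ^ 3 - 1) / 100 * ((2 * t + 1) / (t ^ 2 * (t + 1) ^ 2))
            - (8 / 25 + 12 / (25 * t))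
            = (16 * (t + 1) ^ 2 - (2 * t + 1)) / (100 * (t ^ 2 * (t + 1) ^ 2)) := by
          field_simp
          ring
        rw [hgap]
        exact div_pos (by nlinarith) (by positivity)
    _ ≤ N / 100 * (1 / t ^ 2 - 1 / (t + 1) ^ 2) := by
        rw [hdiff]
        gcongr

lemma MSE_succ_lt_of_cube_le (hq : 1 ≤ q) (hn : 16 * ((q : ℝ) + 1) ^ 3 ≤ n) :
    MSE n (q + 1) < MSE n q := by
  have hq1 : (1 : ℝ) ≤ q := by exact_mod_cast hq
  have hqn := succ_le_half_of_cube_le hn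
  apply MSE_lt_of_scaledRisk_lt (by omega) (by omega) hq (by omega)
  have hvar := scaledVar_succ_sub_le hq
  have hloss : roundingLoss n (q + 1) ≤ 1 / (20 * q) := by
    calc roundingLoss n (q + 1)
        ≤ 1 / (20 * ((q + 1 : ℕ) : ℝ)) :=
          roundingLoss_le_of_cube_le (by omega) (by exact_mod_cast hn)
      _ ≤ 1 / (20 * q) := by gcongr; omega
  have hbias := lt_bias_sq_sub hq1 (N := (n : ℝ) - 1) (by linarith)
  have hcross : 0 ≤ biasGap n / 5 * (1 / (q : ℝ) - 1 / (q + 1)) := by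
    have hgap := biasGap_nonneg (show 2 ≤ n by omega)
    have hinv : 1 / ((q : ℝ) + 1) ≤ 1 / q := by gcongr; linarith
    exact mul_nonneg (by positivity) (sub_nonneg.mpr hinv)
  have hmargin : 12 / (25 * (q : ℝ)) = 43 / (100 * q) + 1 / (20 * q) := by
    field_simp
    norm_num
  have hsub := scaledRisk_sub n q (q + 1)
  push_cast at hsub
  linarith

end Descent

section Ascent

variable {n p q : ℕ}

lemma MSE_one_lt (hn : n ≤ 16) (hq : 2 ≤ q) (hqn : q ≤ (n - 1) / 2) : MSE n 1 < MSE n q := by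
  apply MSE_lt_of_scaledRisk_lt le_rfl (by omega) (by omega) (by omega)
  have hn5 : (5 : ℝ) ≤ n := by exact_mod_cast (by omega : 5 ≤ n)
  have hn16 : (n : ℝ) ≤ 16 := by exact_mod_cast hn
  have hloss : roundingLoss n 1 ≤ 7 / 30 := by
    rw [roundingLoss, scaledVar_one, Nat.cast_one, div_le_iff₀ (by linarith)]
    linarith
  have hinv_nonneg : 0 ≤ 1 / (q : ℝ) := by positivity
  have hinv_sq_nonneg : 0 ≤ 1 / (q : ℝ) ^ 2 := by positivity
  have hbias : ((n : ℝ) - 1) / 100 * (1 - 1 / (q : ℝ) ^ 2) ≤ ((n : ℝ) - 1) / 100 :=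
    mul_le_of_le_one_right (by linarith) (by linarith)
  have hcross : biasGap n / 5 * (1 - 1 / (q : ℝ)) ≤ biasGap n / 5 :=
    mul_le_of_le_one_right (by linarith [biasGap_nonneg (show 2 ≤ n by omega)]) (by linarith)
  have hsub := scaledRisk_sub n 1 q
  rw [scaledVar_one] at hsub
  norm_num only at hsub
  linarith [le_scaledVar_of_two_le hq, biasGap_le (show 2 ≤ n by omega)]

lemma add_div_sq_mul_sq_le {s t : ℝ} (hs : 0 < s) (hst : s + 1 ≤ t) :
    (s + t) / (s ^ 2 * t ^ 2) ≤ (2 * s + 1) / (s ^ 2 * (s + 1) ^ 2) := by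
  have ht : 0 < t := by linarith
  calc (s + t) / (s ^ 2 * t ^ 2)
      = 1 / (s * t ^ 2) + 1 / (s ^ 2 * t) := by field_simp
    _ ≤ 1 / (s * (s + 1) ^ 2) + 1 / (s ^ 2 * (s + 1)) := by gcongr
    _ = (2 * s + 1) / (s ^ 2 * (s + 1) ^ 2) := by
        field_simp
        ring

lemma slopeBound_le_scaledRisk_sub (hn : 2 ≤ n) (hp : 2 ≤ p) (hpq : p < q)
    (hslope : 0 ≤ slopeBound ((n : ℝ) - 1) p) :
    slopeBound ((n : ℝ) - 1) p ≤ scaledRisk n q - scaledRisk n p := by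
  have hp0 : (0 : ℝ) < p := by exact_mod_cast (by omega : 0 < p)
  have hpq' : (p : ℝ) + 1 ≤ q := by exact_mod_cast hpq
  have hq0 : (0 : ℝ) < q := by linarith
  have hN : (0 : ℝ) ≤ n - 1 := by
    rw [sub_nonneg]
    exact_mod_cast (by omega : 1 ≤ n)
  have hsum := add_div_sq_mul_sq_le hp0 hpq'
  have hcross : biasGap n / 5 * (1 / (p : ℝ) - 1 / q) ≤ 11 / 10 / 5 * (1 / (p : ℝ) - 1 / q) := by
    have hinv : 1 / (q : ℝ) ≤ 1 / p := by gcongr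
    have : 0 ≤ 1 / (p : ℝ) - 1 / q := sub_nonneg.mpr hinv
    gcongr
    exact biasGap_le hn
  calc slopeBound ((n : ℝ) - 1) p
      ≤ (q - p) * slopeBound ((n : ℝ) - 1) p :=
        le_mul_of_one_le_left hslope (by linarith)
    _ ≤ (q - p) * (8 / 25 - 277 / (700 * (p * q))
          - ((p : ℝ) + q) / (p ^ 2 * q ^ 2) / 100 * (n - 1)) := by
        rw [slopeBound]
        gcongr
        linarith
    _ = 8 / 25 * ((q : ℝ) - p) - 123 / 700 * (1 / p - 1 / q)
          - ((n : ℝ) - 1) / 100 * (1 / (p : ℝ) ^ 2 - 1 / (q : ℝ) ^ 2)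
          - 11 / 10 / 5 * (1 / (p : ℝ) - 1 / q) := by
        field_simp
        ring
    _ ≤ scaledRisk n q - scaledRisk n p := by
        rw [scaledRisk_sub]
        linarith [le_scaledVar_sub hp hpq]

/-- After clearing the denominator, the claim says that a concave quadratic exceeds `c` between
two points where it does. -/
lemma div_sub_lt_sub_mul_of_mem_Icc {A B c r a b x : ℝ} (hB : 0 ≤ B) (hra : r < a)
    (hx : x ∈ Set.Icc a b) (ha : c / (a - r) < A - B * a) (hb : c / (b - r) < A - B * b) :
    c / (x - r) < A - B * x := by
  obtain ⟨hax, hxb⟩ := hx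
  rw [div_lt_iff₀ (by linarith)] at ha hb ⊢
  by_contra! hle
  obtain rfl | hax := hax.eq_or_lt
  · linarith
  have hconc : 0 ≤ B * ((x - a) * (b - x) * (b - a)) := by
    have := sub_nonneg.mpr hxb
    have := sub_pos.mpr hax
    have : 0 ≤ b - a := by linarith
    positivity
  nlinarith [mul_le_mul_of_nonneg_left ha.le (sub_nonneg.mpr hxb),
    mul_lt_mul_of_pos_left hb (sub_pos.mpr hax)]

lemma lt_slopeBound_left {t : ℝ} (ht : 2 ≤ t) :
    73 / 100 * t ^ 2 / (16 * (t - 1) ^ 3 - t) < slopeBound (16 * (t - 1) ^ 3) t := by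
  -- Expanded in powers of `t - 2`, the cleared inequality has only positive coefficients.
  obtain ⟨s, hs, rfl⟩ : ∃ s : ℝ, 0 ≤ s ∧ t = s + 2 := ⟨t - 2, by linarith, by ring⟩
  have hden : 0 < 16 * (s + 2 - 1) ^ 3 - (s + 2) := by
    ring_nf
    positivity
  rw [slopeBound, div_lt_iff₀ hden, ← sub_pos]
  field_simp
  ring_nf
  positivity

lemma lt_slopeBound_right {t : ℝ} (ht : 2 ≤ t) :
    73 / 100 * t ^ 2 / (16 * t ^ 3 - t) < slopeBound (16 * t ^ 3) t := by
  obtain ⟨s, hs, rfl⟩ : ∃ s : ℝ, 0 ≤ s ∧ t = s + 2 := ⟨t - 2, by linarith, by ring⟩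
  have hden : 0 < 16 * (s + 2) ^ 3 - (s + 2) := by
    ring_nf
    positivity
  rw [slopeBound, div_lt_iff₀ hden, ← sub_pos]
  field_simp
  ring_nf
  positivity

lemma roundingLoss_lt_slopeBound (hp : 2 ≤ p)
    (hn : (n : ℝ) - 1 ∈ Set.Icc (16 * ((p : ℝ) - 1) ^ 3) (16 * (p : ℝ) ^ 3)) :
    roundingLoss n p < slopeBound ((n : ℝ) - 1) p := by
  have hp2 : (2 : ℝ) ≤ p := by exact_mod_cast hp
  have hleft : (p : ℝ) < 16 * (p - 1) ^ 3 := by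
    nlinarith [pow_le_pow_left₀ zero_le_one (show (1 : ℝ) ≤ p - 1 by linarith) 2]
  have hden : (0 : ℝ) ≤ n - 1 - p := by linarith [hn.1]
  calc roundingLoss n p
      ≤ 73 / 100 * p ^ 2 / (n - 1 - p) := by
        rw [roundingLoss, pow_two, ← mul_assoc]
        gcongr
        exact scaledVar_le_mul hp
    _ < slopeBound ((n : ℝ) - 1) p :=
        div_sub_lt_sub_mul_of_mem_Icc (by positivity) hleft hn
          (lt_slopeBound_left hp2) (lt_slopeBound_right hp2)

lemma MSE_lt_of_le_cube (hp : 1 ≤ p) (hpn : 16 * ((p : ℝ) - 1) ^ 3 < n)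
    (hnp : (n : ℝ) ≤ 16 * (p : ℝ) ^ 3) (hpq : p < q) (hqn : q ≤ (n - 1) / 2) :
    MSE n p < MSE n q := by
  obtain rfl | h2 := hp.eq_or_lt
  · norm_num only at hnp
    exact MSE_one_lt (by exact_mod_cast hnp) hpq hqn
  have hpn' : 16 * ((p : ℝ) - 1) ^ 3 ≤ n - 1 := by
    have : 16 * ((p : ℤ) - 1) ^ 3 < n := by exact_mod_cast hpn
    exact_mod_cast Int.le_sub_one_of_lt this
  have hloss := roundingLoss_lt_slopeBound h2 ⟨hpn', by linarith⟩
  have hloss_nonneg : 0 ≤ roundingLoss n p := by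
    have hsub : (0 : ℝ) ≤ n - 1 - p := by
      have : (p : ℝ) + 1 ≤ n := by exact_mod_cast (by omega : p + 1 ≤ n)
      linarith
    exact div_nonneg (mul_nonneg (scaledVar_pos hp).le p.cast_nonneg) hsub
  have hslope := slopeBound_le_scaledRisk_sub (by omega) h2 hpq (hloss_nonneg.trans hloss.le)
  exact MSE_lt_of_scaledRisk_lt hp (by omega) (by omega) (by omega) (by linarith)

end Ascent

section SmoothQ

variable {n q : ℕ} {t : ℝ}

lemma le_smoothQ_iff (ht : 0 ≤ t) : t ≤ smoothQ n ↔ 16 * t ^ 3 ≤ n := by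
  rw [smoothQ, one_div, le_rpow_inv_iff_of_pos ht (by positivity) (by norm_num),
    le_div_iff₀' (by norm_num)]
  norm_cast

lemma smoothQ_le_iff (ht : 0 ≤ t) : smoothQ n ≤ t ↔ (n : ℝ) ≤ 16 * t ^ 3 := by
  rw [smoothQ, one_div, rpow_inv_le_iff_of_pos (by positivity) ht (by norm_num),
    div_le_iff₀' (by norm_num)]
  norm_cast

lemma smoothQ_pos (hn : 0 < n) : 0 < smoothQ n := by
  rw [smoothQ]
  positivity

lemma MSE_ceil_smoothQ_lt (hq : ⌈smoothQ n⌉₊ < q) (hqn : q ≤ (n - 1) / 2) :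
    MSE n ⌈smoothQ n⌉₊ < MSE n q := by
  have hpos : 0 < smoothQ n := smoothQ_pos (by omega)
  have hceil_pos : 1 ≤ ⌈smoothQ n⌉₊ := Nat.ceil_pos.mpr hpos
  have hpred_nonneg : (0 : ℝ) ≤ ⌈smoothQ n⌉₊ - 1 :=
    sub_nonneg.mpr (by exact_mod_cast hceil_pos)
  have hpred_lt : (⌈smoothQ n⌉₊ : ℝ) - 1 < smoothQ n :=
    sub_lt_iff_lt_add.mpr (Nat.ceil_lt_add_one hpos.le)
  have hlower : 16 * ((⌈smoothQ n⌉₊ : ℝ) - 1) ^ 3 < n :=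
    lt_of_not_ge fun h => hpred_lt.not_ge ((smoothQ_le_iff hpred_nonneg).mpr h)
  have hupper : (n : ℝ) ≤ 16 * (⌈smoothQ n⌉₊ : ℝ) ^ 3 :=
    (smoothQ_le_iff (Nat.cast_nonneg _)).mp (Nat.le_ceil _)
  exact MSE_lt_of_le_cube hceil_pos hlower hupper hq hqn

end SmoothQ

/-- The smooth approximation `q̃(n) = (n/16)^(1/3)` is within distance one of
any minimizer `q*(n)` of `MSE_n(q)` over `1 ≤ q ≤ ⌊(n-1)/2⌋`. -/
theorem approx_optimal_q (n : ℕ) (hn : 3 ≤ n)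
    (qstar : ℕ) (hq1 : 1 ≤ qstar) (hq2 : qstar ≤ (n - 1) / 2)
    (hmin : ∀ q : ℕ, 1 ≤ q → q ≤ (n - 1) / 2 → MSE n qstar ≤ MSE n q) :
    |((n : ℝ) / 16) ^ ((1 : ℝ) / 3) - (qstar : ℝ)| < 1 := by
  change |smoothQ n - qstar| < 1
  have hpos : 0 < smoothQ n := smoothQ_pos (by omega)
  rw [abs_sub_lt_iff]
  constructor
  · by_contra! hfar
    have hcube : 16 * ((qstar : ℝ) + 1) ^ 3 ≤ n :=
      (le_smoothQ_iff (by positivity)).mp (by linarith)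
    have hle := hmin (qstar + 1) (by omega) (succ_le_half_of_cube_le hcube)
    exact hle.not_gt (MSE_succ_lt_of_cube_le hq1 hcube)
  · by_contra! hfar
    have hceil_lt : ⌈smoothQ n⌉₊ < qstar := by
      have := Nat.ceil_lt_add_one hpos.le
      exact_mod_cast this.trans_le (show smoothQ n + 1 ≤ qstar by linarith)
    have hle := hmin ⌈smoothQ n⌉₊ (Nat.ceil_pos.mpr hpos) (by omega)
    exact hle.not_gt (MSE_ceil_smoothQ_lt hceil_lt hq2)
end

section
/- (Modified Borell inequality) Let X_1, ..., X_p be jointly Gaussian mean-zero real random variables with σ² = max_i Var(X_i) finite and nonzero. Then for any λ > 0, P(max_i X_i > E[max_i X_i] + λ) ≤ exp(-λ²/(2σ²)). -/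
open MeasureTheory ProbabilityTheory

open scoped NNReal

/-!
A centred Gaussian measure `μ` is the `n`-fold convolution of its image under scaling by `1 / √n`.
Let `f` be a function whose derivative is Lipschitz and takes values in a bounded closed convex set
of functionals of `μ`-variance at most `v`. Translating `f`, or averaging it over some of the
convolution factors, preserves these properties, so the excess of the log-Laplace transform
`log ∫ exp f` over the mean `∫ f` adds up along the convolution. For a single factor a second-order
Taylor expansion bounds the excess by `v / (2 n) + O(n ^ (-3 / 2))`; summing over `n` factors and
letting `n → ∞` gives `∫ exp f ∂μ ≤ exp (∫ f ∂μ + v / 2)`.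

The soft maximum `log (∑ i, exp (b * x i)) / b` is such a function: its gradient is a probability
vector, so its derivative is a convex combination of coordinates and has variance at most the
largest coordinate variance. Letting `b → ∞`, the centred maximum is sub-Gaussian, and Chernoff's
bound gives the tail estimate.
-/

section ExponentialMoments

variable {E : Type*} [NormedAddCommGroup E] [MeasurableSpace E] {M N : Measure E}

/-- `M` has exponential moments of every order, i.e. `∫ exp (c * ‖x‖) ∂M` is finite for all `c`. -/
def HasExpNormMoments (M : Measure E) : Prop :=
  ∀ c : ℝ, Integrable (fun x ↦ Real.exp (c * ‖x‖)) M

namespace HasExpNormMoments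

theorem integrable_norm_pow_mul_exp (hM : HasExpNormMoments M) (n : ℕ) (c : ℝ) :
    Integrable (fun x ↦ ‖x‖ ^ n * Real.exp (c * ‖x‖)) M := by
  simpa using integrable_pow_abs_mul_exp_of_integrable_exp_mul (X := fun x : E ↦ ‖x‖)
    one_ne_zero (hM (c + 1)) (hM (c - 1)) n

theorem integrable_norm_pow (hM : HasExpNormMoments M) (n : ℕ) :
    Integrable (fun x ↦ ‖x‖ ^ n) M := by
  simpa using hM.integrable_norm_pow_mul_exp n 0

variable [BorelSpace E]

theorem integrable_exp_of_lipschitzWith (hM : HasExpNormMoments M) {K : ℝ≥0} {f : E → ℝ}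
    (hf : LipschitzWith K f) : Integrable (fun x ↦ Real.exp (f x)) M := by
  refine ((hM K).const_mul (Real.exp (f 0))).mono'
    (Real.continuous_exp.comp hf.continuous).aestronglyMeasurable (ae_of_all _ fun x ↦ ?_)
  have h := (le_abs_self _).trans (hf.norm_sub_le x 0)
  rw [sub_zero] at h
  rw [Real.norm_eq_abs, Real.abs_exp, ← Real.exp_add, Real.exp_le_exp]
  linarith

theorem integrable_of_lipschitzWith [IsFiniteMeasure M] (hM : HasExpNormMoments M) {K : ℝ≥0}
    {f : E → ℝ} (hf : LipschitzWith K f) : Integrable f M := by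
  refine ((integrable_const |f 0|).add ((hM.integrable_norm_pow 1).const_mul K)).mono'
    hf.continuous.aestronglyMeasurable (ae_of_all _ fun x ↦ ?_)
  have h := hf.norm_sub_le x 0
  rw [sub_zero] at h
  rw [Pi.add_apply, pow_one]
  exact (norm_le_norm_add_norm_sub' _ _).trans (add_le_add_right h _)

theorem integrable_dual_sq [NormedSpace ℝ E] (hM : HasExpNormMoments M) (L : StrongDual ℝ E) :
    Integrable (fun x ↦ L x ^ 2) M := by
  refine ((hM.integrable_norm_pow 2).const_mul (‖L‖ ^ 2)).mono'
    (L.continuous.pow 2).aestronglyMeasurable (ae_of_all _ fun x ↦ ?_)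
  rw [norm_pow, ← mul_pow]
  gcongr
  exact L.le_opNorm x

variable [SecondCountableTopology E]

theorem conv [SFinite M] [SFinite N] (hM : HasExpNormMoments M) (hN : HasExpNormMoments N) :
    HasExpNormMoments (M ∗ N) := fun c ↦ by
  rw [Measure.conv, integrable_map_measure (by fun_prop) (by fun_prop)]
  refine ((hM |c|).mul_prod (hN |c|)).mono' (by fun_prop) (ae_of_all _ fun z ↦ ?_)
  rw [Real.norm_eq_abs, Function.comp_apply, Real.abs_exp, ← Real.exp_add, ← mul_add,
    Real.exp_le_exp]
  gcongr
  exacts [le_abs_self c, norm_add_le _ _]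

theorem map_smul [NormedSpace ℝ E] (hM : HasExpNormMoments M) (s : ℝ) :
    HasExpNormMoments (M.map (s • ·)) := fun c ↦ by
  rw [integrable_map_measure (by fun_prop) (by fun_prop)]
  simpa [Function.comp_def, norm_smul, mul_assoc] using hM (c * |s|)

end HasExpNormMoments

theorem hasExpNormMoments_of_isGaussian [NormedSpace ℝ E] [BorelSpace E]
    [SecondCountableTopology E] [CompleteSpace E] (μ : Measure E) [IsGaussian μ] :
    HasExpNormMoments μ := fun c ↦ by
  obtain ⟨C, hC, hint⟩ := IsGaussian.exists_integrable_exp_sq μ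
  refine (hint.const_mul (Real.exp (c ^ 2 / (4 * C)))).mono' (by fun_prop) (ae_of_all _ fun x ↦ ?_)
  rw [Real.norm_eq_abs, Real.abs_exp, ← Real.exp_add, Real.exp_le_exp]
  have h : c ^ 2 / (4 * C) + C * ‖x‖ ^ 2 - c * ‖x‖ = (c - 2 * C * ‖x‖) ^ 2 / (4 * C) := by
    field_simp
    ring
  linarith [show 0 ≤ (c - 2 * C * ‖x‖) ^ 2 / (4 * C) by positivity]

end ExponentialMoments

theorem exp_le_one_add_add_sq_div_two_add (x : ℝ) :
    Real.exp x ≤ 1 + x + x ^ 2 / 2 + |x| ^ 3 * Real.exp |x| := by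
  have h := Complex.norm_exp_sub_sum_le_norm_mul_exp x 3
  norm_cast at h
  simp only [Finset.sum_range_succ, Finset.sum_range_zero, Nat.factorial] at h
  norm_num at h
  linarith [(abs_le.1 h).2]

theorem abs_exp_sub_exp_le_of_nonpos {x y : ℝ} (hx : x ≤ 0) (hy : y ≤ 0) :
    |Real.exp x - Real.exp y| ≤ |x - y| := by
  simpa using (convex_Iic (0 : ℝ)).norm_image_sub_le_of_norm_deriv_le (f := Real.exp) (C := 1)
    (fun z _ ↦ Real.differentiableAt_exp) (fun z hz ↦ by simpa using hz) hy hx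

section LipschitzFDeriv

variable {E : Type*} [NormedAddCommGroup E] [NormedSpace ℝ E] {S : Set (StrongDual ℝ E)}
  {C K : ℝ≥0} {f : E → ℝ}

/-- The class of differentiable functions whose derivative is `C`-Lipschitz and takes its values
in `S`. For a bounded closed convex `S` it is stable under translations and averages. -/
structure HasLipschitzFDerivIn (S : Set (StrongDual ℝ E)) (C : ℝ≥0) (f : E → ℝ) : Prop where
  differentiable : Differentiable ℝ f
  fderiv_mem : ∀ x, fderiv ℝ f x ∈ S
  lipschitz_fderiv : LipschitzWith C (fderiv ℝ f)

namespace HasLipschitzFDerivIn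

theorem lipschitzWith (h : HasLipschitzFDerivIn S C f) (hK : ∀ L ∈ S, ‖L‖₊ ≤ K) :
    LipschitzWith K f :=
  lipschitzWith_of_nnnorm_fderiv_le h.differentiable fun x ↦ hK _ (h.fderiv_mem x)

theorem translate (h : HasLipschitzFDerivIn S C f) (a : E) :
    HasLipschitzFDerivIn S C fun x ↦ f (a + x) where
  differentiable := h.differentiable.comp (differentiable_id.const_add a)
  fderiv_mem x := by
    rw [fderiv_comp_add_left]
    exact h.fderiv_mem _
  lipschitz_fderiv := .of_dist_le_mul fun x y ↦ by
    simpa [fderiv_comp_add_left] using h.lipschitz_fderiv.dist_le_mul (a + x) (a + y)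

theorem abs_sub_sub_fderiv_le (h : HasLipschitzFDerivIn S C f) (x d : E) :
    |f (x + d) - f x - fderiv ℝ f x d| ≤ C * ‖d‖ ^ 2 := by
  have hball : x + d ∈ Metric.closedBall x ‖d‖ := by simp
  have key := (convex_closedBall x ‖d‖).norm_image_sub_le_of_norm_fderiv_le'
    (φ := fderiv ℝ f x) (C := C * ‖d‖) (fun y _ ↦ h.differentiable y)
    (fun y hy ↦ (h.lipschitz_fderiv.norm_sub_le y x).trans
      (by gcongr; simpa [dist_eq_norm] using hy))
    (Metric.mem_closedBall_self (norm_nonneg d)) hball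
  simpa [sq, mul_assoc] using key

theorem sq_sub_le (h : HasLipschitzFDerivIn S C f) (hK : ∀ L ∈ S, ‖L‖₊ ≤ K) (x d : E) :
    (f (x + d) - f x) ^ 2 ≤ fderiv ℝ f x d ^ 2 + 2 * (K * C * ‖d‖ ^ 3) := by
  set L := fderiv ℝ f x
  set g := f (x + d) - f x
  have hg : |g| ≤ K * ‖d‖ := by simpa using (h.lipschitzWith hK).norm_sub_le (x + d) x
  have hL : |L d| ≤ K * ‖d‖ := L.le_of_opNorm_le (hK _ (h.fderiv_mem x)) d
  calc g ^ 2 = L d ^ 2 + (g - L d) * (g + L d) := by ring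
    _ ≤ L d ^ 2 + |g - L d| * |g + L d| := by
      rw [← abs_mul]
      gcongr
      exact le_abs_self _
    _ ≤ L d ^ 2 + C * ‖d‖ ^ 2 * (K * ‖d‖ + K * ‖d‖) := by
      gcongr
      exacts [h.abs_sub_sub_fderiv_le x d, (abs_add_le _ _).trans (add_le_add hg hL)]
    _ = L d ^ 2 + 2 * (K * C * ‖d‖ ^ 3) := by ring

theorem exp_sub_le (h : HasLipschitzFDerivIn S C f) (hK : ∀ L ∈ S, ‖L‖₊ ≤ K) (x d : E) :
    Real.exp (f (x + d) - f x) ≤ 1 + (f (x + d) - f x) + fderiv ℝ f x d ^ 2 / 2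
      + (K * C + K ^ 3) * (‖d‖ ^ 3 * Real.exp (K * ‖d‖)) := by
  set g := f (x + d) - f x
  have hg : |g| ≤ K * ‖d‖ := by simpa using (h.lipschitzWith hK).norm_sub_le (x + d) x
  have hcube : |g| ^ 3 * Real.exp |g| ≤ K ^ 3 * (‖d‖ ^ 3 * Real.exp (K * ‖d‖)) :=
    calc |g| ^ 3 * Real.exp |g| ≤ (K * ‖d‖) ^ 3 * Real.exp (K * ‖d‖) := by gcongr
      _ = _ := by ring
  have hexp : K * C * ‖d‖ ^ 3 ≤ K * C * (‖d‖ ^ 3 * Real.exp (K * ‖d‖)) := by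
    gcongr
    exact le_mul_of_one_le_right (by positivity) (Real.one_le_exp (by positivity))
  linarith [exp_le_one_add_add_sq_div_two_add g, h.sq_sub_le hK x d]

variable [MeasurableSpace E] [BorelSpace E] [SecondCountableTopology E] {M : Measure E}
  [IsProbabilityMeasure M]

theorem integrable_fderiv_add (h : HasLipschitzFDerivIn S C f) (hK : ∀ L ∈ S, ‖L‖₊ ≤ K) (x : E) :
    Integrable (fun y ↦ fderiv ℝ f (x + y)) M :=
  .of_bound (h.lipschitz_fderiv.continuous.comp (continuous_const_add x)).aestronglyMeasurable
    K (ae_of_all _ fun _ ↦ hK _ (h.fderiv_mem _))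

theorem hasFDerivAt_average (h : HasLipschitzFDerivIn S C f) (hK : ∀ L ∈ S, ‖L‖₊ ≤ K)
    (hM : HasExpNormMoments M) (x : E) :
    HasFDerivAt (fun x ↦ ∫ y, f (x + y) ∂M) (∫ y, fderiv ℝ f (x + y) ∂M) x := by
  have hint (z : E) : Integrable (fun y ↦ f (z + y)) M :=
    hM.integrable_of_lipschitzWith ((h.translate z).lipschitzWith hK)
  refine hasFDerivAt_integral_of_dominated_of_fderiv_le
    (F' := fun z y ↦ fderiv ℝ f (z + y)) Filter.univ_mem
    (.of_forall fun z ↦ (hint z).aestronglyMeasurable) (hint x)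
    (h.integrable_fderiv_add hK x).aestronglyMeasurable (bound := fun _ ↦ (K : ℝ))
    (ae_of_all _ fun y z _ ↦ hK _ (h.fderiv_mem _)) (integrable_const _)
    (ae_of_all _ fun y z _ ↦ ?_)
  exact (hasFDerivAt_comp_add_right y).2 (h.differentiable (z + y)).hasFDerivAt

theorem average (h : HasLipschitzFDerivIn S C f) (hS : Convex ℝ S) (hSc : IsClosed S)
    (hK : ∀ L ∈ S, ‖L‖₊ ≤ K) (hM : HasExpNormMoments M) :
    HasLipschitzFDerivIn S C fun x ↦ ∫ y, f (x + y) ∂M := by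
  have hfderiv (x : E) := (h.hasFDerivAt_average hK hM x).fderiv
  refine ⟨fun x ↦ (h.hasFDerivAt_average hK hM x).differentiableAt, fun x ↦ ?_,
    .of_dist_le_mul fun x y ↦ ?_⟩
  · rw [hfderiv]
    exact hS.integral_mem hSc (ae_of_all _ fun y ↦ h.fderiv_mem _) (h.integrable_fderiv_add hK x)
  · rw [hfderiv, hfderiv, dist_eq_norm,
      ← integral_sub (h.integrable_fderiv_add hK x) (h.integrable_fderiv_add hK y)]
    refine (norm_integral_le_of_norm_le_const (C := C * dist x y) (ae_of_all _ fun z ↦ ?_)).trans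
      (by simp)
    simpa [dist_eq_norm] using h.lipschitz_fderiv.dist_le_mul (x + z) (y + z)

end HasLipschitzFDerivIn

end LipschitzFDeriv

section LogLaplace

variable {E : Type*} [NormedAddCommGroup E] [NormedSpace ℝ E] [MeasurableSpace E] [BorelSpace E]
  {S : Set (StrongDual ℝ E)} {C K : ℝ≥0} {M N : Measure E}

/-- The log-Laplace transform of `M` exceeds the mean by at most `κ`, uniformly over the functions
of class `HasLipschitzFDerivIn S C`. The integrals are Bochner integrals, so the bound is
meaningful only when `M` has enough exponential moments and `S` is bounded. -/
def LogLaplaceBound (S : Set (StrongDual ℝ E)) (C : ℝ≥0) (κ : ℝ) (M : Measure E) : Prop :=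
  ∀ f, HasLipschitzFDerivIn S C f → ∫ x, Real.exp (f x) ∂M ≤ Real.exp (∫ x, f x ∂M + κ)

theorem logLaplaceBound_of_integral_sq_le [IsProbabilityMeasure M] (hM : HasExpNormMoments M)
    (hK : ∀ L ∈ S, ‖L‖₊ ≤ K) {v : ℝ} (hv : ∀ L ∈ S, ∫ x, L x ^ 2 ∂M ≤ v) :
    LogLaplaceBound S C
      (v / 2 + (K * C + K ^ 3) * ∫ x, ‖x‖ ^ 3 * Real.exp (K * ‖x‖) ∂M) M := by
  intro f hf
  set L := fderiv ℝ f 0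
  set R := ∫ x, ‖x‖ ^ 3 * Real.exp (K * ‖x‖) ∂M
  have hfi : Integrable f M := hM.integrable_of_lipschitzWith (hf.lipschitzWith hK)
  have hrem := (hM.integrable_norm_pow_mul_exp 3 K).const_mul (K * C + K ^ 3 : ℝ)
  have hsub : Integrable (fun x ↦ f x - f 0) M := hfi.sub (integrable_const _)
  have hlin : Integrable (fun x ↦ 1 + (f x - f 0)) M := (integrable_const _).add hsub
  have hsq : Integrable (fun x ↦ L x ^ 2 / 2) M := (hM.integrable_dual_sq L).div_const 2
  have hquad : Integrable (fun x ↦ 1 + (f x - f 0) + L x ^ 2 / 2) M := hlin.add hsq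
  -- The first-order term is kept as `f x - f 0` rather than linearised, so it integrates exactly to
  -- the mean and `M` need not be centred.
  calc ∫ x, Real.exp (f x) ∂M = Real.exp (f 0) * ∫ x, Real.exp (f x - f 0) ∂M := by
        simp only [← integral_const_mul, ← Real.exp_add, add_sub_cancel]
    _ ≤ Real.exp (f 0) * ∫ x, (1 + (f x - f 0) + L x ^ 2 / 2
          + (K * C + K ^ 3) * (‖x‖ ^ 3 * Real.exp (K * ‖x‖))) ∂M := by
        gcongr _ * ?_
        refine integral_mono_of_nonneg (ae_of_all _ fun x ↦ (Real.exp_pos _).le)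
          (hquad.add hrem) (ae_of_all _ fun x ↦ ?_)
        simpa using hf.exp_sub_le hK 0 x
    _ = Real.exp (f 0) * ((∫ x, f x ∂M - f 0 + ((∫ x, L x ^ 2 ∂M) / 2 + (K * C + K ^ 3) * R))
          + 1) := by
        rw [integral_add hquad hrem, integral_add hlin hsq,
          integral_add (integrable_const _) hsub, integral_sub hfi (integrable_const _),
          integral_div, integral_const_mul]
        simp only [integral_const, probReal_univ, one_smul]
        ring
    _ ≤ Real.exp (f 0) * Real.exp (∫ x, f x ∂M - f 0 + (v / 2 + (K * C + K ^ 3) * R)) := by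
        gcongr
        refine (Real.add_one_le_exp _).trans ?_
        gcongr
        exact hv L (hf.fderiv_mem 0)
    _ = Real.exp (∫ x, f x ∂M + (v / 2 + (K * C + K ^ 3) * R)) := by
        rw [← Real.exp_add]
        ring_nf

variable [SecondCountableTopology E]

theorem logLaplaceBound_map_smul [IsProbabilityMeasure M] (hM : HasExpNormMoments M)
    (hK : ∀ L ∈ S, ‖L‖₊ ≤ K) {v : ℝ} (hv : ∀ L ∈ S, ∫ x, L x ^ 2 ∂M ≤ v) {s : ℝ} (hs : 0 ≤ s)
    (hs1 : s ≤ 1) :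
    LogLaplaceBound S C
      (s ^ 2 * (v / 2) + s ^ 3 * ((K * C + K ^ 3) * ∫ x, ‖x‖ ^ 3 * Real.exp (K * ‖x‖) ∂M))
      (M.map (s • ·)) := by
  have hmap {F : E → ℝ} (hF : Continuous F) : ∫ x, F x ∂(M.map (s • ·)) = ∫ x, F (s • x) ∂M :=
    integral_map (by fun_prop) hF.aestronglyMeasurable
  have := Measure.isProbabilityMeasure_map (μ := M) (f := (s • · : E → E)) (by fun_prop)
  have hvs (L) (hL : L ∈ S) : ∫ x, L x ^ 2 ∂(M.map (s • ·)) ≤ s ^ 2 * v := by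
    rw [hmap (by fun_prop)]
    simp only [map_smul, smul_eq_mul, mul_pow, integral_const_mul]
    gcongr
    exact hv L hL
  have hrem : ∫ x, ‖x‖ ^ 3 * Real.exp (K * ‖x‖) ∂(M.map (s • ·))
      ≤ s ^ 3 * ∫ x, ‖x‖ ^ 3 * Real.exp (K * ‖x‖) ∂M := by
    rw [hmap (by fun_prop), ← integral_const_mul]
    refine integral_mono_of_nonneg (ae_of_all _ fun x ↦ by positivity)
      ((hM.integrable_norm_pow_mul_exp 3 K).const_mul _) (ae_of_all _ fun x ↦ ?_)
    simp only [norm_smul, Real.norm_of_nonneg hs, mul_pow, mul_assoc]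
    gcongr
    exact mul_le_of_le_one_left (norm_nonneg x) hs1
  intro f hf
  refine (logLaplaceBound_of_integral_sq_le (hM.map_smul s) hK hvs f hf).trans ?_
  rw [mul_left_comm (s ^ 3), mul_div_assoc]
  gcongr

theorem LogLaplaceBound.conv [IsProbabilityMeasure M] [IsProbabilityMeasure N] {κ₁ κ₂ : ℝ}
    (hS : Convex ℝ S) (hSc : IsClosed S) (hK : ∀ L ∈ S, ‖L‖₊ ≤ K)
    (hM : HasExpNormMoments M) (hN : HasExpNormMoments N)
    (h₁ : LogLaplaceBound S C κ₁ M) (h₂ : LogLaplaceBound S C κ₂ N) :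
    LogLaplaceBound S C (κ₁ + κ₂) (M ∗ N) := by
  intro f hf
  have hfK := hf.lipschitzWith hK
  have hg := hf.average hS hSc hK hN
  have hexp := (hM.conv hN).integrable_exp_of_lipschitzWith hfK
  calc ∫ z, Real.exp (f z) ∂(M ∗ N)
      = ∫ x, ∫ y, Real.exp (f (x + y)) ∂N ∂M := integral_conv hexp
    _ ≤ ∫ x, Real.exp (∫ y, f (x + y) ∂N) * Real.exp κ₂ ∂M := by
        refine integral_mono_of_nonneg (ae_of_all _ fun x ↦ integral_nonneg fun y ↦ by positivity)
          ((hM.integrable_exp_of_lipschitzWith (hg.lipschitzWith hK)).mul_const _)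
          (ae_of_all _ fun x ↦ ?_)
        simpa only [Real.exp_add] using h₂ _ (hf.translate x)
    _ = (∫ x, Real.exp (∫ y, f (x + y) ∂N) ∂M) * Real.exp κ₂ := integral_mul_const _ _
    _ ≤ Real.exp (∫ x, ∫ y, f (x + y) ∂N ∂M + κ₁) * Real.exp κ₂ := by
        gcongr
        exact h₁ _ hg
    _ = Real.exp (∫ z, f z ∂(M ∗ N) + (κ₁ + κ₂)) := by
        rw [integral_conv ((hM.conv hN).integrable_of_lipschitzWith hfK), ← Real.exp_add, add_assoc]

end LogLaplace

section Gaussian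

variable {E : Type*} [NormedAddCommGroup E] [NormedSpace ℝ E] [MeasurableSpace E] [BorelSpace E]
  [SecondCountableTopology E] [CompleteSpace E] {μ : Measure E} [IsGaussian μ]

theorem charFunDual_map_smul_of_integral_eq_zero (hμ : ∫ x, x ∂μ = 0) (s : ℝ)
    (L : StrongDual ℝ E) :
    charFunDual (μ.map (s • ·)) L = Complex.exp (-(s ^ 2 * Var[L; μ]) / 2) := by
  have hs : L.comp (s • ContinuousLinearMap.id ℝ E) = s • L := by ext; simp
  have h : charFunDual (μ.map (s • ·)) L = charFunDual μ (s • L) := by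
    rw [← hs, ← charFunDual_map]
    rfl
  rw [h, IsGaussian.charFunDual_eq_of_integral_eq_zero hμ, FunLike.coe_smul, variance_smul]
  push_cast
  rfl

theorem map_smul_conv_map_smul_of_integral_eq_zero (hμ : ∫ x, x ∂μ = 0) {a b c : ℝ}
    (h : a ^ 2 + b ^ 2 = c ^ 2) : (μ.map (a • ·)) ∗ (μ.map (b • ·)) = μ.map (c • ·) := by
  refine Measure.ext_of_charFunDual (funext fun L ↦ ?_)
  simp only [charFunDual_conv, charFunDual_map_smul_of_integral_eq_zero hμ]
  rw [← Complex.exp_add, ← Complex.ofReal_pow c, ← h]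
  push_cast
  ring_nf

variable {S : Set (StrongDual ℝ E)} {C K : ℝ≥0}

theorem LogLaplaceBound.map_sqrt_mul_smul {κ s : ℝ} (hμ : ∫ x, x ∂μ = 0) (hS : Convex ℝ S)
    (hSc : IsClosed S) (hK : ∀ L ∈ S, ‖L‖₊ ≤ K) (h : LogLaplaceBound S C κ (μ.map (s • ·)))
    (n : ℕ) : LogLaplaceBound S C (n * κ) (μ.map ((√n * s) • ·)) := by
  have hμexp := hasExpNormMoments_of_isGaussian μ
  have hprob (a : ℝ) : IsProbabilityMeasure (μ.map (a • ·)) :=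
    Measure.isProbabilityMeasure_map (by fun_prop)
  induction n with
  | zero => intro f _; simp
  | succ n ih =>
    have hconv : (μ.map ((√n * s) • ·)) ∗ (μ.map (s • ·)) = μ.map ((√(n + 1 : ℕ) * s) • ·) := by
      refine map_smul_conv_map_smul_of_integral_eq_zero hμ ?_
      rw [mul_pow, mul_pow, Real.sq_sqrt (by positivity), Real.sq_sqrt (by positivity)]
      push_cast
      ring
    rw [← hconv, Nat.cast_succ, add_one_mul]
    exact ih.conv hS hSc hK (hμexp.map_smul _) (hμexp.map_smul _) h

theorem logLaplaceBound_of_isGaussian (hμ : ∫ x, x ∂μ = 0) (hS : Convex ℝ S) (hSc : IsClosed S)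
    (hK : ∀ L ∈ S, ‖L‖₊ ≤ K) {v : ℝ} (hv : ∀ L ∈ S, Var[L; μ] ≤ v) :
    LogLaplaceBound S C (v / 2) μ := by
  intro f hf
  have hv' (L) (hL : L ∈ S) : ∫ x, L x ^ 2 ∂μ ≤ v := by
    rw [← variance_of_integral_eq_zero (by fun_prop) (by simp [IsGaussian.integral_dual, hμ])]
    exact hv L hL
  set D := (K * C + K ^ 3) * ∫ x, ‖x‖ ^ 3 * Real.exp (K * ‖x‖) ∂μ
  have hbound (n : ℕ) (hn : n ≠ 0) :
      ∫ x, Real.exp (f x) ∂μ ≤ Real.exp (∫ x, f x ∂μ + (v / 2 + D * (√n)⁻¹)) := by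
    have hpos : 0 < √n := by positivity
    have hinv : n * (√n)⁻¹ ^ 2 = 1 := by
      rw [inv_pow, Real.sq_sqrt n.cast_nonneg, mul_inv_cancel₀ (mod_cast hn)]
    have hn1 : 1 ≤ √n := Real.one_le_sqrt.2 (mod_cast Nat.one_le_iff_ne_zero.2 hn)
    have h := (logLaplaceBound_map_smul (C := C) (hasExpNormMoments_of_isGaussian μ) hK hv'
      (inv_nonneg.2 hpos.le) (inv_le_one_of_one_le₀ hn1)).map_sqrt_mul_smul hμ hS hSc hK n f hf
    simp only [mul_inv_cancel₀ hpos.ne', one_smul, Measure.map_id'] at h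
    convert h using 3
    linear_combination -(v / 2 + D * (√n)⁻¹) * hinv
  have hlim : Filter.Tendsto
      (fun n : ℕ ↦ Real.exp (∫ x, f x ∂μ + (v / 2 + D * (√n)⁻¹))) Filter.atTop
      (nhds (Real.exp (∫ x, f x ∂μ + (v / 2 + D * 0)))) :=
    (Real.continuous_exp.tendsto _).comp ((((tendsto_inv_atTop_zero.comp
      (Real.tendsto_sqrt_atTop.comp tendsto_natCast_atTop_atTop)).const_mul D).const_add
        (v / 2)).const_add _)
  rw [mul_zero, add_zero] at hlim
  exact ge_of_tendsto hlim ((Filter.eventually_ne_atTop 0).mono hbound)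

end Gaussian

section Variance

variable {E : Type*} [NormedAddCommGroup E] [NormedSpace ℝ E] [MeasurableSpace E] [BorelSpace E]
  [CompleteSpace E] {M : Measure E} [IsFiniteMeasure M]

theorem convex_setOf_variance_le (hM : MemLp id 2 M) (v : ℝ) :
    Convex ℝ {L : StrongDual ℝ E | Var[L; M] ≤ v} := by
  simp only [← covarianceBilinDual_self_eq_variance hM]
  intro L hL L' hL' a b ha hb hab
  have hpos := covarianceBilinDual_self_nonneg (μ := M) (L - L')
  have hcomm := covarianceBilinDual_comm (μ := M) L L'
  simp only [Set.mem_ofPred_eq, map_add, map_sub, map_smul, add_apply, sub_apply, smul_apply,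
    smul_eq_mul] at hL hL' hpos ⊢
  rw [← hcomm] at hpos ⊢
  obtain rfl : b = 1 - a := by linarith
  -- For a quadratic form `Q` and `a + b = 1`,
  -- `a * Q L + b * Q L' - Q (a • L + b • L') = a * b * Q (L - L')`.
  nlinarith [mul_nonneg (mul_nonneg ha hb) hpos, mul_le_mul_of_nonneg_left hL ha,
    mul_le_mul_of_nonneg_left hL' hb]

theorem isClosed_setOf_variance_le (hM : MemLp id 2 M) (v : ℝ) :
    IsClosed {L : StrongDual ℝ E | Var[L; M] ≤ v} := by
  simp only [← covarianceBilinDual_self_eq_variance hM]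
  exact isClosed_le (by fun_prop) continuous_const

end Variance

theorem hasSubgaussianMGF_of_forall_exists_abs_sub_le {Ω : Type*} [MeasurableSpace Ω]
    {P : Measure Ω} {c : ℝ≥0} {Z : Ω → ℝ} (hZ : AEMeasurable Z P)
    (h : ∀ ε > 0, ∃ Y, (∀ ω, |Z ω - Y ω| ≤ ε) ∧ HasSubgaussianMGF Y c P) :
    HasSubgaussianMGF Z c P := by
  have hexp {ε : ℝ} {Y : Ω → ℝ} (hY : ∀ ω, |Z ω - Y ω| ≤ ε) (t : ℝ) (ω : Ω) :
      Real.exp (t * Z ω) ≤ Real.exp (|t| * ε) * Real.exp (t * Y ω) := by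
    rw [← Real.exp_add, Real.exp_le_exp, ← sub_le_iff_le_add, ← mul_sub]
    exact (le_abs_self _).trans (by rw [abs_mul]; gcongr; exact hY ω)
  refine ⟨fun t ↦ ?_, fun t ↦ ?_⟩
  · obtain ⟨Y, hY, hsub⟩ := h 1 one_pos
    refine ((hsub.integrable_exp_mul t).const_mul (Real.exp (|t| * 1))).mono' (by fun_prop)
      (ae_of_all _ fun ω ↦ ?_)
    rw [Real.norm_eq_abs, Real.abs_exp]
    exact hexp hY t ω
  · have hlim : Filter.Tendsto (fun ε ↦ Real.exp (|t| * ε) * Real.exp (c * t ^ 2 / 2))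
        (nhdsWithin 0 (Set.Ioi 0)) (nhds (Real.exp (c * t ^ 2 / 2))) :=
      (Continuous.tendsto' (by fun_prop) _ _ (by simp)).mono_left nhdsWithin_le_nhds
    refine ge_of_tendsto hlim (eventually_mem_nhdsWithin.mono fun ε hε ↦ ?_)
    obtain ⟨Y, hY, hsub⟩ := h ε hε
    calc mgf Z P t ≤ ∫ ω, Real.exp (|t| * ε) * Real.exp (t * Y ω) ∂P :=
          integral_mono_of_nonneg (ae_of_all _ fun ω ↦ (Real.exp_pos _).le)
            ((hsub.integrable_exp_mul t).const_mul _) (ae_of_all _ (hexp hY t))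
      _ = Real.exp (|t| * ε) * mgf Y P t := integral_const_mul _ _
      _ ≤ Real.exp (|t| * ε) * Real.exp (c * t ^ 2 / 2) := by
          gcongr
          exact hsub.mgf_le t

section SmoothConcentration

variable {E : Type*} [NormedAddCommGroup E] [NormedSpace ℝ E] [MeasurableSpace E] [BorelSpace E]
  [SecondCountableTopology E] [CompleteSpace E] {μ : Measure E} [IsGaussian μ] {C K : ℝ≥0}
  {f : E → ℝ}

theorem integral_exp_le_of_variance_fderiv_le (hμ : ∫ x, x ∂μ = 0) (hf : Differentiable ℝ f)
    (hfK : LipschitzWith K f) (hfC : LipschitzWith C (fderiv ℝ f)) {v : ℝ}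
    (hv : ∀ x, Var[fderiv ℝ f x; μ] ≤ v) :
    ∫ x, Real.exp (f x) ∂μ ≤ Real.exp (∫ x, f x ∂μ + v / 2) := by
  have hball : {L : StrongDual ℝ E | ‖L‖₊ ≤ K} = Metric.closedBall 0 K := by
    ext L
    simp [← NNReal.coe_le_coe]
  have hμ2 : MemLp id 2 μ := IsGaussian.memLp_two_id
  refine logLaplaceBound_of_isGaussian
    (S := {L | ‖L‖₊ ≤ K} ∩ {L | Var[L; μ] ≤ v}) (C := C) hμ ?_ ?_ (fun L hL ↦ hL.1)
    (fun L hL ↦ hL.2) f ⟨hf, fun x ↦ ⟨norm_fderiv_le_of_lipschitz ℝ hfK, hv x⟩, hfC⟩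
  · rw [hball]
    exact (convex_closedBall _ _).inter (convex_setOf_variance_le hμ2 v)
  · rw [hball]
    exact Metric.isClosed_closedBall.inter (isClosed_setOf_variance_le hμ2 v)

theorem hasSubgaussianMGF_of_variance_fderiv_le_of_integral_eq_zero {v : ℝ≥0}
    (hμ : ∫ x, x ∂μ = 0) (hf : Differentiable ℝ f) (hfK : LipschitzWith K f)
    (hfC : LipschitzWith C (fderiv ℝ f)) (hv : ∀ x, Var[fderiv ℝ f x; μ] ≤ v) :
    HasSubgaussianMGF (fun x ↦ f x - ∫ y, f y ∂μ) v μ := by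
  have hfderiv (t : ℝ) : fderiv ℝ (fun x ↦ t * f x) = fun x ↦ t • fderiv ℝ f x := by
    ext1 x
    exact fderiv_const_mul (hf x) t
  have htK (t : ℝ) : LipschitzWith (‖t‖₊ * K) fun x ↦ t * f x :=
    (lipschitzWith_smul t).comp hfK
  have htC (t : ℝ) : LipschitzWith (‖t‖₊ * C) (fderiv ℝ fun x ↦ t * f x) := by
    rw [hfderiv]
    exact (lipschitzWith_smul t).comp hfC
  have hexp (t : ℝ) (x : E) : Real.exp (t * (f x - ∫ y, f y ∂μ))
      = Real.exp (-(t * ∫ y, f y ∂μ)) * Real.exp (t * f x) := by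
    rw [← Real.exp_add]
    ring_nf
  refine ⟨fun t ↦ ?_, fun t ↦ ?_⟩
  · simp only [hexp]
    exact ((hasExpNormMoments_of_isGaussian μ).integrable_exp_of_lipschitzWith (htK t)).const_mul _
  · have h := integral_exp_le_of_variance_fderiv_le hμ (hf.const_mul t) (htK t) (htC t)
      (v := t ^ 2 * v) fun x ↦ by
        rw [hfderiv, FunLike.coe_smul, variance_smul]
        gcongr
        exact hv x
    calc mgf (fun x ↦ f x - ∫ y, f y ∂μ) μ t
        = Real.exp (-(t * ∫ y, f y ∂μ)) * ∫ x, Real.exp (t * f x) ∂μ := by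
          simp only [mgf, hexp, integral_const_mul]
      _ ≤ Real.exp (-(t * ∫ y, f y ∂μ)) * Real.exp (∫ x, t * f x ∂μ + t ^ 2 * v / 2) := by
          gcongr
      _ = Real.exp (v * t ^ 2 / 2) := by
          rw [integral_const_mul, ← Real.exp_add]
          ring_nf

theorem hasSubgaussianMGF_of_variance_fderiv_le {v : ℝ≥0} (hf : Differentiable ℝ f)
    (hfK : LipschitzWith K f) (hfC : LipschitzWith C (fderiv ℝ f))
    (hv : ∀ x, Var[fderiv ℝ f x; μ] ≤ v) :
    HasSubgaussianMGF (fun x ↦ f x - ∫ y, f y ∂μ) v μ := by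
  set m := ∫ x, x ∂μ
  have hsub : Measurable fun x : E ↦ x - m := by fun_prop
  have hmap {F : E → ℝ} (hF : Continuous F) :
      ∫ x, F (x + m) ∂(μ.map (· - m)) = ∫ x, F x ∂μ := by
    rw [integral_map hsub.aemeasurable (by fun_prop)]
    simp
  have hcentred : ∫ x, x ∂(μ.map (· - m)) = 0 := by
    rw [integral_map hsub.aemeasurable (by fun_prop),
      integral_sub (f := fun x ↦ x) IsGaussian.integrable_id (integrable_const m)]
    simp [m]
  have hvar (L : StrongDual ℝ E) : Var[L; μ.map (· - m)] = Var[L; μ] := by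
    rw [variance_map (by fun_prop) hsub.aemeasurable]
    simpa [Function.comp_def] using
      variance_sub_const (X := L) (μ := μ) (by fun_prop) (L m)
  have hfderiv : fderiv ℝ (fun x ↦ f (x + m)) = fun x ↦ fderiv ℝ f (x + m) :=
    funext fun x ↦ fderiv_comp_add_right m
  have h := hasSubgaussianMGF_of_variance_fderiv_le_of_integral_eq_zero (v := v) hcentred
    (f := fun x ↦ f (x + m)) (hf.comp (differentiable_id.add_const m))
    (hfK.comp (isometry_add_right m).lipschitz)
    (by rw [hfderiv]; exact hfC.comp (isometry_add_right m).lipschitz) fun x ↦ by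
      rw [hfderiv, hvar]
      exact hv _
  rw [hmap hf.continuous] at h
  simpa [Function.comp_def] using h.of_map hsub.aemeasurable

end SmoothConcentration

section SoftMaximum

variable {ι : Type*} [Fintype ι]

/-- The soft maximum of `x` at inverse temperature `b`, a smooth approximation of `⨆ i, x i` for
large `b`. -/
noncomputable def softMax (b : ℝ) (x : ι → ℝ) : ℝ := Real.log (∑ i, Real.exp (b * x i)) / b

/-- The Gibbs weights at inverse temperature `b`, the coordinates of the gradient of
`softMax b`. -/
noncomputable def gibbsWeight (b : ℝ) (x : ι → ℝ) (i : ι) : ℝ :=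
  Real.exp (b * x i) / ∑ j, Real.exp (b * x j)

theorem norm_proj_le_one (i : ι) :
    ‖(ContinuousLinearMap.proj i : StrongDual ℝ (ι → ℝ))‖ ≤ 1 :=
  ContinuousLinearMap.opNorm_le_bound _ zero_le_one fun x ↦ by
    simpa using norm_le_pi_norm x i

variable [Nonempty ι] {b : ℝ}

theorem sum_exp_mul_pos (b : ℝ) (x : ι → ℝ) : 0 < ∑ i, Real.exp (b * x i) :=
  Finset.sum_pos (fun _ _ ↦ Real.exp_pos _) Finset.univ_nonempty

theorem gibbsWeight_pos (b : ℝ) (x : ι → ℝ) (i : ι) : 0 < gibbsWeight b x i :=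
  div_pos (Real.exp_pos _) (sum_exp_mul_pos b x)

theorem sum_gibbsWeight (b : ℝ) (x : ι → ℝ) : ∑ i, gibbsWeight b x i = 1 := by
  simp only [gibbsWeight]
  rw [← Finset.sum_div, div_self (sum_exp_mul_pos b x).ne']

theorem iSup_le_softMax (hb : 0 < b) (x : ι → ℝ) : ⨆ i, x i ≤ softMax b x := by
  refine ciSup_le fun i ↦ ?_
  rw [softMax, le_div_iff₀ hb, Real.le_log_iff_exp_le (sum_exp_mul_pos b x), mul_comm]
  exact Finset.single_le_sum (f := fun i ↦ Real.exp (b * x i)) (fun j _ ↦ Real.exp_nonneg _)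
    (Finset.mem_univ i)

theorem softMax_le_iSup_add (hb : 0 < b) (x : ι → ℝ) :
    softMax b x ≤ (⨆ i, x i) + Real.log (Fintype.card ι) / b := by
  have hc : (0 : ℝ) < Fintype.card ι := mod_cast Fintype.card_pos
  rw [softMax, div_le_iff₀ hb, add_mul, div_mul_cancel₀ _ hb.ne',
    Real.log_le_iff_le_exp (sum_exp_mul_pos b x), Real.exp_add, Real.exp_log hc]
  calc ∑ i, Real.exp (b * x i) ≤ ∑ _i : ι, Real.exp ((⨆ i, x i) * b) := by
        refine Finset.sum_le_sum fun i _ ↦ Real.exp_le_exp.2 ?_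
        rw [mul_comm]
        gcongr
        exact le_ciSup (Finite.bddAbove_range x) i
    _ = Real.exp ((⨆ i, x i) * b) * Fintype.card ι := by simp [mul_comm]

theorem hasFDerivAt_softMax (hb : b ≠ 0) (x : ι → ℝ) :
    HasFDerivAt (softMax b)
      (∑ i, gibbsWeight b x i • (ContinuousLinearMap.proj i : StrongDual ℝ (ι → ℝ))) x := by
  have hexp (i : ι) := ((hasFDerivAt_apply (𝕜 := ℝ) i x).const_mul b).exp
  refine (((HasFDerivAt.fun_sum fun i (_ : i ∈ Finset.univ) ↦ hexp i).log
    (sum_exp_mul_pos b x).ne').mul_const b⁻¹).congr_fderiv ?_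
  rw [Finset.smul_sum, Finset.smul_sum]
  refine Finset.sum_congr rfl fun i _ ↦ ?_
  rw [gibbsWeight]
  simp only [smul_smul]
  congr 1
  field_simp

theorem fderiv_softMax_mem {S : Set (StrongDual ℝ (ι → ℝ))} (hb : b ≠ 0) (hS : Convex ℝ S)
    (h : ∀ i, ContinuousLinearMap.proj i ∈ S) (x : ι → ℝ) : fderiv ℝ (softMax b) x ∈ S := by
  rw [(hasFDerivAt_softMax hb x).fderiv]
  exact hS.sum_mem (fun i _ ↦ (gibbsWeight_pos b x i).le) (sum_gibbsWeight b x) fun i _ ↦ h i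

theorem lipschitzWith_softMax (hb : b ≠ 0) : LipschitzWith 1 (softMax (ι := ι) b) :=
  lipschitzWith_of_nnnorm_fderiv_le (fun x ↦ (hasFDerivAt_softMax hb x).differentiableAt)
    fun x ↦ by
      simpa [← NNReal.coe_le_coe] using fderiv_softMax_mem hb (convex_closedBall 0 1)
        (fun i ↦ by simpa using norm_proj_le_one i) x

theorem gibbsWeight_eq_exp (hb : b ≠ 0) (x : ι → ℝ) (i : ι) :
    gibbsWeight b x i = Real.exp (b * (x i - softMax b x)) := by
  rw [gibbsWeight, softMax, mul_sub, mul_div_cancel₀ _ hb, Real.exp_sub,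
    Real.exp_log (sum_exp_mul_pos b x)]

theorem abs_gibbsWeight_sub_le (hb : 0 < b) (x y : ι → ℝ) (i : ι) :
    |gibbsWeight b x i - gibbsWeight b y i| ≤ 2 * b * ‖x - y‖ := by
  have hnonpos (z : ι → ℝ) : b * (z i - softMax b z) ≤ 0 :=
    mul_nonpos_of_nonneg_of_nonpos hb.le <| sub_nonpos.2 <|
      (le_ciSup (Finite.bddAbove_range z) i).trans (iSup_le_softMax hb z)
  have hsoft : |softMax b x - softMax b y| ≤ ‖x - y‖ := by
    simpa using (lipschitzWith_softMax hb.ne').norm_sub_le x y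
  calc |gibbsWeight b x i - gibbsWeight b y i|
      ≤ |b * (x i - softMax b x) - b * (y i - softMax b y)| := by
        rw [gibbsWeight_eq_exp hb.ne', gibbsWeight_eq_exp hb.ne']
        exact abs_exp_sub_exp_le_of_nonpos (hnonpos x) (hnonpos y)
    _ = b * |(x - y) i - (softMax b x - softMax b y)| := by
        rw [← mul_sub, abs_mul, abs_of_pos hb, Pi.sub_apply]
        ring_nf
    _ ≤ b * (‖x - y‖ + ‖x - y‖) := by
        gcongr
        exact (abs_sub _ _).trans (add_le_add (norm_le_pi_norm (x - y) i) hsoft)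
    _ = 2 * b * ‖x - y‖ := by ring

theorem lipschitzWith_fderiv_softMax {b : ℝ≥0} (hb : 0 < b) :
    LipschitzWith (Fintype.card ι * (2 * b)) (fderiv ℝ (softMax (ι := ι) b)) :=
  .of_dist_le_mul fun x y ↦ by
    have hb' : (b : ℝ) ≠ 0 := mod_cast hb.ne'
    rw [(hasFDerivAt_softMax hb' x).fderiv, (hasFDerivAt_softMax hb' y).fderiv, dist_eq_norm,
      dist_eq_norm, ← Finset.sum_sub_distrib]
    calc _ ≤ ∑ _i : ι, 2 * (b : ℝ) * ‖x - y‖ := norm_sum_le_of_le _ fun i _ ↦ by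
          have hsub := (sub_smul (gibbsWeight b x i) (gibbsWeight b y i)
            (ContinuousLinearMap.proj i : StrongDual ℝ (ι → ℝ))).symm
          rw [hsub, norm_smul, Real.norm_eq_abs]
          exact (mul_le_of_le_one_right (abs_nonneg _) (norm_proj_le_one i)).trans
            (abs_gibbsWeight_sub_le hb x y i)
      _ = (Fintype.card ι * (2 * b) : ℝ≥0) * ‖x - y‖ := by simp [mul_assoc]

end SoftMaximum

theorem abs_sub_integral_sub_sub_integral_le {Ω : Type*} [MeasurableSpace Ω] {P : Measure Ω}
    [IsProbabilityMeasure P] {Y Z : Ω → ℝ} {δ : ℝ} (hY : Integrable Y P) (hZ : Integrable Z P)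
    (hle : ∀ ω, Z ω ≤ Y ω) (hle' : ∀ ω, Y ω ≤ Z ω + δ) (ω : Ω) :
    |Z ω - ∫ ω', Z ω' ∂P - (Y ω - ∫ ω', Y ω' ∂P)| ≤ δ := by
  have h : ∫ ω, Z ω ∂P ≤ ∫ ω, Y ω ∂P := integral_mono hZ hY hle
  have h' : ∫ ω, Y ω ∂P ≤ ∫ ω, Z ω ∂P + δ :=
    (integral_mono hY (hZ.add (integrable_const δ)) hle').trans_eq (by
      simp [integral_add hZ (integrable_const δ)])
  rw [abs_le]
  constructor <;> linarith [hle ω, hle' ω]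

section GaussianMaximum

variable {ι : Type*} [Nonempty ι] {μ : Measure (ι → ℝ)} [IsGaussian μ] {v : ℝ≥0}

theorem hasSubgaussianMGF_softMax_sub_integral [Fintype ι] {b : ℝ≥0} (hb : 0 < b)
    (hv : ∀ i, Var[fun x ↦ x i; μ] ≤ v) :
    HasSubgaussianMGF (fun x ↦ softMax b x - ∫ y, softMax b y ∂μ) v μ := by
  have hb' : (b : ℝ) ≠ 0 := mod_cast hb.ne'
  exact hasSubgaussianMGF_of_variance_fderiv_le
    (fun x ↦ (hasFDerivAt_softMax hb' x).differentiableAt) (lipschitzWith_softMax hb')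
    (lipschitzWith_fderiv_softMax hb)
    (fderiv_softMax_mem (S := {L | Var[L; μ] ≤ v}) hb'
      (convex_setOf_variance_le IsGaussian.memLp_two_id v) hv)

theorem hasSubgaussianMGF_iSup_sub_integral [Finite ι] (hv : ∀ i, Var[fun x ↦ x i; μ] ≤ v) :
    HasSubgaussianMGF (fun x ↦ (⨆ i, x i) - ∫ y, ⨆ i, y i ∂μ) v μ := by
  have := Fintype.ofFinite ι
  have hmeas : Measurable fun x : ι → ℝ ↦ ⨆ i, x i := Measurable.iSup measurable_pi_apply
  have hint : Integrable (fun x : ι → ℝ ↦ ⨆ i, x i) μ := by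
    refine IsGaussian.integrable_id.norm.mono' hmeas.aestronglyMeasurable (ae_of_all _ fun x ↦ ?_)
    obtain ⟨i, hi⟩ := exists_eq_ciSup_of_finite (f := x)
    exact hi ▸ norm_le_pi_norm x i
  refine hasSubgaussianMGF_of_forall_exists_abs_sub_le (hmeas.sub_const _).aemeasurable
    fun ε hε ↦ ?_
  obtain ⟨b, hbε⟩ := exists_gt (Real.log (Fintype.card ι) / ε)
  have hb : 0 < b := (div_nonneg (Real.log_natCast_nonneg _) hε.le).trans_lt hbε
  lift b to ℝ≥0 using hb.le
  have hδ : Real.log (Fintype.card ι) / b ≤ ε := (div_le_comm₀ hb hε).2 hbε.le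
  refine ⟨_, fun x ↦ ?_, hasSubgaussianMGF_softMax_sub_integral (b := b) hb hv⟩
  exact abs_sub_integral_sub_sub_integral_le
    ((hasExpNormMoments_of_isGaussian μ).integrable_of_lipschitzWith (lipschitzWith_softMax hb.ne'))
    hint (iSup_le_softMax hb)
    (fun x ↦ (softMax_le_iSup_add hb x).trans (by gcongr)) x

end GaussianMaximum

theorem hasGaussianLaw_pi_of_map_sum_mul_eq_gaussianReal {Ω ι : Type*} [MeasurableSpace Ω]
    {P : Measure Ω} [Fintype ι] {X : ι → Ω → ℝ} (hX : ∀ i, AEMeasurable (X i) P)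
    (h : ∀ c : ι → ℝ, ∃ m v, P.map (fun ω ↦ ∑ i, c i * X i ω) = gaussianReal m v) :
    HasGaussianLaw (fun ω i ↦ X i ω) P where
  isGaussian_map := by
    classical
    have hY : AEMeasurable (fun ω i ↦ X i ω) P := aemeasurable_pi_iff.2 hX
    refine isGaussian_of_map_eq_gaussianReal fun L ↦ ?_
    have hL : L ∘ (fun ω i ↦ X i ω) = fun ω ↦ ∑ i, L (Pi.single i 1) * X i ω := by
      ext ω
      conv_lhs => rw [Function.comp_apply, pi_eq_sum_univ' fun i ↦ X i ω]
      simp [mul_comm]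
    rw [AEMeasurable.map_map_of_aemeasurable (by fun_prop) hY, hL]
    exact h fun i ↦ L (Pi.single i 1)

theorem modified_borell_general {Ω ι : Type*} [MeasurableSpace Ω] {P : Measure Ω} [Finite ι]
    [Nonempty ι] {X : ι → Ω → ℝ} (hX : HasGaussianLaw (fun ω i ↦ X i ω) P) {σ2 : ℝ}
    (hσ2 : 0 < σ2) (hvar : ∀ i, Var[X i; P] ≤ σ2) {l : ℝ} (hl : 0 ≤ l) :
    P.real {ω | (∫ ω', ⨆ i, X i ω' ∂P) + l ≤ ⨆ i, X i ω} ≤ Real.exp (-l ^ 2 / (2 * σ2)) := by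
  have := hX.isGaussian_map
  lift σ2 to ℝ≥0 using hσ2.le
  have hsub := (hasSubgaussianMGF_iSup_sub_integral (μ := P.map fun ω i ↦ X i ω) (v := σ2)
    fun i ↦ by
      rw [variance_map (measurable_pi_apply i).aemeasurable hX.aemeasurable]
      exact hvar i).of_map hX.aemeasurable
  rw [integral_map hX.aemeasurable
    (Measurable.iSup measurable_pi_apply).aestronglyMeasurable] at hsub
  simpa [Function.comp_def, le_sub_iff_add_le'] using hsub.measure_ge_le hl

/-- Modified Borell inequality: if `X 0, ..., X (p-1)` are jointly Gaussian mean-zero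
random variables with `σ² = max_i Var(X i)` finite and nonzero, then for any `l > 0`,
`P(max_i X i > E[max_i X i] + l) ≤ exp(-l²/(2σ²))`. -/
theorem modified_borell
    {Ω : Type*} [MeasurableSpace Ω] (P : Measure Ω) [IsProbabilityMeasure P]
    (p : ℕ) (hp : 0 < p) (X : Fin p → Ω → ℝ) (hmeas : ∀ i, Measurable (X i))
    (hGauss : ∀ c : Fin p → ℝ, ∃ v : NNReal,
      Measure.map (fun ω => ∑ i, c i * X i ω) P = gaussianReal 0 v)
    (hmean : ∀ i, ∫ ω, X i ω ∂P = 0)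
    (σ2 : ℝ) (hσ2 : σ2 = ⨆ i, variance (X i) P) (hσ2pos : 0 < σ2) :
    ∀ l : ℝ, 0 < l →
      (P {ω | (∫ ω', (⨆ i, X i ω') ∂P) + l < ⨆ i, X i ω}).toReal
        ≤ Real.exp (-(l ^ 2) / (2 * σ2)) := by
  intro l hl
  have : Nonempty (Fin p) := ⟨⟨0, hp⟩⟩
  have hX := hasGaussianLaw_pi_of_map_sum_mul_eq_gaussianReal (fun i ↦ (hmeas i).aemeasurable)
    fun c ↦ ⟨0, hGauss c⟩
  have hvar (i) : Var[X i; P] ≤ σ2 :=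
    hσ2 ▸ le_ciSup (f := fun i ↦ Var[X i; P]) (Finite.bddAbove_range _) i
  exact (measureReal_mono fun ω (hω : (∫ ω', ⨆ i, X i ω' ∂P) + l < _) ↦ hω.le).trans
    (modified_borell_general hX hσ2pos hvar hl.le)
end
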